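/- For every q > 0 and every σ > 1433/1248, for Lebesgue-almost every θ ∈ ℝ there exists K > 0 such that θ is a (q, K, σ)-Diophantine 2D rotation, i.e., for all n ∈ ℤ² \ {0} and both choices of sign, dist(q^{±1} A^T R_{±θ} A^{−T} n, ℤ²) ≥ K / |n|^{2σ}. -/

import Mathlib

open scoped Real BigOperators
open MeasureTheory Filter Topology Matrix

noncomputable section

/-- The 2×2 rotation matrix through angle `φ`. -/
def Rot (φ : ℝ) : Matrix (Fin 2) (Fin 2) ℝ :=
  !![Real.cos φ, -Real.sin φ; Real.sin φ, Real.cos φ]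

/-- Euclidean norm on `ℝ²`. -/
def norm2 (v : Fin 2 → ℝ) : ℝ := Real.sqrt (v 0 ^ 2 + v 1 ^ 2)

/-- Euclidean norm on `ℝ³`. -/
def norm3 (v : Fin 3 → ℝ) : ℝ := Real.sqrt (v 0 ^ 2 + v 1 ^ 2 + v 2 ^ 2)

/-- Cast an integer vector to a real vector. -/
def iv (n : Fin 2 → ℤ) : Fin 2 → ℝ := fun i => (n i : ℝ)

/-- The lattice `M ℤ²`. -/
def lat (M : Matrix (Fin 2) (Fin 2) ℝ) : Set (Fin 2 → ℝ) :=
  {v | ∃ n : Fin 2 → ℤ, v = M.mulVec (iv n)}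

/-- The unit cell `M [0,1)²`. -/
def cell (M : Matrix (Fin 2) (Fin 2) ℝ) : Set (Fin 2 → ℝ) :=
  {v | ∃ t : Fin 2 → ℝ, (∀ i, t i ∈ Set.Ico (0 : ℝ) 1) ∧ v = M.mulVec t}

/-- The reciprocal matrix `2π M⁻ᵀ`. -/
def recip (M : Matrix (Fin 2) (Fin 2) ℝ) : Matrix (Fin 2) (Fin 2) ℝ :=
  (2 * π) • (M⁻¹)ᵀ

/-- A pair of lattices with reciprocal-lattice matrices `B1`, `B2` is incommensurate iff
`G₁ + G₂ = 0` with `G_k` in the respective reciprocal lattice implies `G₁ = G₂ = 0`. -/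
def Incommensurate (B1 B2 : Matrix (Fin 2) (Fin 2) ℝ) : Prop :=
  ∀ G1 ∈ lat B1, ∀ G2 ∈ lat B2, G1 + G2 = 0 → G1 = 0 ∧ G2 = 0

/-- Euclidean distance from `v ∈ ℝ²` to the integer lattice `ℤ²`. -/
def distZ2 (v : Fin 2 → ℝ) : ℝ := ⨅ m : Fin 2 → ℤ, norm2 (v - iv m)

/-- `θ` is a `(q,K,σ)`-Diophantine 2D rotation. -/
def IsDiophantine (A : Matrix (Fin 2) (Fin 2) ℝ) (q K σ θ : ℝ) : Prop :=
  ∀ n : Fin 2 → ℤ, n ≠ 0 →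
    K / norm2 (iv n) ^ (2 * σ) ≤ distZ2 ((q • (Aᵀ * Rot θ * (A⁻¹)ᵀ)).mulVec (iv n)) ∧
    K / norm2 (iv n) ^ (2 * σ) ≤ distZ2 ((q⁻¹ • (Aᵀ * Rot (-θ) * (A⁻¹)ᵀ)).mulVec (iv n))

/-- The moiré length scale ratio `ρ_𝓜`. -/
def rhoM (q θ : ℝ) : ℝ :=
  (Real.sqrt ((Real.sqrt q - (Real.sqrt q)⁻¹) ^ 2 + 4 * Real.sin (θ / 2) ^ 2))⁻¹

/-- Riemann zeta function (for real `s > 1`, via its Dirichlet series). -/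
def zetaR (s : ℝ) : ℝ := ∑' n : ℕ, ((n : ℝ) + 1) ^ (-s)

/-- Operator (spectral) norm of a 2×2 real matrix w.r.t. the Euclidean norm. -/
def opNorm2 (M : Matrix (Fin 2) (Fin 2) ℝ) : ℝ :=
  ⨆ x : {x : Fin 2 → ℝ // norm2 x ≤ 1}, norm2 (M.mulVec x.1)

/-- Embedding `ℝ² ↪ ℝ³`, `x ↦ (x, 0)`. -/
def emb (x : Fin 2 → ℝ) : Fin 3 → ℝ := ![x 0, x 1, 0]

/-- Japanese bracket `⟨x⟩ = (1 + |x|²)^{1/2}` on `ℝ³`. -/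
def jap3 (x : Fin 3 → ℝ) : ℝ := Real.sqrt (1 + norm3 x ^ 2)

/-- The region `ℝ² × [−L, L] ⊆ ℝ³`. -/
def slab (L : ℝ) : Set (Fin 3 → ℝ) := {x | x 2 ∈ Set.Icc (-L) L}

/-- Euclidean inner product on `ℝ²`. -/
def dot2 (a b : Fin 2 → ℝ) : ℝ := ∑ i, a i * b i

/-- The index box `⟦−N, N⟧²`. -/
def box (N : ℕ) : Finset (Fin 2 → ℤ) :=
  Finset.Icc (fun _ => -(N : ℤ)) (fun _ => (N : ℤ))

/-- The normalized Dirichlet kernel `Δ_N^j` of the lattice `A_j ℤ²`. -/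
def Dir (Aj : Matrix (Fin 2) (Fin 2) ℝ) (N : ℕ) (G : Fin 2 → ℝ) : ℂ :=
  (((2 * N + 1 : ℝ)) ^ 2)⁻¹ •
    ∑ n ∈ box N, Complex.exp (Complex.I * (dot2 G (Aj.mulVec (iv n)) : ℝ))

lemma my_diff (G : (Fin 2 → ℝ) →L[ℝ] (Fin 2 → ℝ)) (x : Fin 2 → ℝ) (a b : ℝ) :
    (Real.cos a • x + Real.sin a • G x) - (Real.cos b • x + Real.sin b • G x)
      = (2 * Real.sin ((a - b) / 2)) •
        (Real.cos ((a + b) / 2 ) • G x - Real.sin ((a + b) / 2) • x) := by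
  have h1 := Real.cos_sub_cos a b
  have h2 := Real.sin_sub_sin a b
  have : (Real.cos a • x + Real.sin a • G x) - (Real.cos b • x + Real.sin b • G x)
      = (Real.cos a - Real.cos b) • x + (Real.sin a - Real.sin b) • G x := by module
  rw [this, h1, h2]
  module

lemma my_upper (G : (Fin 2 → ℝ) →L[ℝ] (Fin 2 → ℝ)) (x : Fin 2 → ℝ) (s : ℝ) :
    ‖Real.cos s • G x - Real.sin s • x‖ ≤ (1 + ‖G‖) * ‖x‖ := by
  have h1 : ‖Real.cos s • G x‖ ≤ ‖G‖ * ‖x‖ := by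
    rw [norm_smul, Real.norm_eq_abs]
    calc |Real.cos s| * ‖G x‖ ≤ 1 * ‖G x‖ := by
          gcongr; exact Real.abs_cos_le_one s
      _ ≤ _ := by rw [one_mul]; exact G.le_opNorm x
  have h2 : ‖Real.sin s • x‖ ≤ ‖x‖ := by
    rw [norm_smul, Real.norm_eq_abs]
    calc |Real.sin s| * ‖x‖ ≤ 1 * ‖x‖ := by
          gcongr; exact Real.abs_sin_le_one s
      _ = _ := one_mul _
  calc _ ≤ _ := norm_sub_le _ _
    _ ≤ _ := by linarith

lemma my_lower (G : (Fin 2 → ℝ) →L[ℝ] (Fin 2 → ℝ)) (hG : ∀ x, G (G x) = -x)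
    (x : Fin 2 → ℝ) (s : ℝ) :
    ‖x‖ ≤ (1 + ‖G‖) * ‖Real.cos s • G x - Real.sin s • x‖ := by
  have h := my_upper G (Real.cos s • G x - Real.sin s • x) (Real.pi - s)
  have e : Real.cos (Real.pi - s) • G (Real.cos s • G x - Real.sin s • x)
      - Real.sin (Real.pi - s) • (Real.cos s • G x - Real.sin s • x) = x := by
    rw [map_sub, map_smul, map_smul, hG, Real.cos_pi_sub, Real.sin_pi_sub]
    have := Real.sin_sq_add_cos_sq s
    calc _ = (Real.sin s ^ 2 + Real.cos s ^ 2) • x := by module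
      _ = x := by rw [this, one_smul]
  rwa [e] at h

lemma my_iv_norm (n : Fin 2 → ℤ) : ‖iv n‖ = ‖n‖ := by
  have : ∀ i, ‖(n i : ℝ)‖₊ = ‖n i‖₊ := fun i => by
    ext; simp [Int.norm_eq_abs]
  simp [iv, Pi.norm_def, this]

lemma my_norm_ge (n : Fin 2 → ℤ) (hn : n ≠ 0) : 1 ≤ ‖n‖ := by
  obtain ⟨i, hi⟩ := Function.ne_iff.mp hn
  refine le_trans ?_ (norm_le_pi_norm n i)
  rw [Int.norm_eq_abs]
  exact_mod_cast Int.one_le_abs hi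

lemma my_piece (G : (Fin 2 → ℝ) →L[ℝ] (Fin 2 → ℝ)) (hG : ∀ x, G (G x) = -x)
    (q : ℝ) (hq : 0 < q) (n : Fin 2 → ℤ) (hn : n ≠ 0) (ε : ℝ) (hε' : ε ≤ 1 / 4)
    (a b r : ℝ) (hr1 : r ≤ 1) (hab : |a - b| ≤ r) (hr : q * (1 + ‖G‖) * ‖n‖ * r ≤ 1 / 4)
    (m m' : Fin 2 → ℤ)
    (h1 : ‖q • (Real.cos a • iv n + Real.sin a • G (iv n)) - iv m‖ < ε)
    (h2 : ‖q • (Real.cos b • iv n + Real.sin b • G (iv n)) - iv m'‖ < ε) :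
    |a - b| ≤ 4 * (1 + ‖G‖) * ε / (q * ‖n‖) := by
  have hn1 := my_norm_ge n hn
  have hg := norm_nonneg G
  set x := iv n with hx
  have hxn : ‖x‖ = ‖n‖ := my_iv_norm n
  set va := q • (Real.cos a • x + Real.sin a • G x)
  set vb := q • (Real.cos b • x + Real.sin b • G x)
  set y := Real.cos ((a + b) / 2 ) • G x - Real.sin ((a + b) / 2) • x with hy
  have hd : ‖va - vb‖ = q * (2 * |Real.sin ((a - b) / 2)|) * ‖y‖ := by
    have : va - vb = q • ((2 * Real.sin ((a - b) / 2)) • y) := by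
      rw [hy, ← my_diff, smul_sub]
    rw [this, norm_smul, norm_smul, norm_mul]
    simp [abs_of_pos hq, mul_assoc]
  have hyu : ‖y‖ ≤ (1 + ‖G‖) * ‖n‖ := hxn ▸ my_upper G x _
  have hyl : ‖n‖ ≤ (1 + ‖G‖) * ‖y‖ := hxn ▸ my_lower G hG x _
  have hsu : 2 * |Real.sin ((a - b) / 2)| ≤ |a - b| := by
    have := Real.abs_sin_le_abs (x := (a - b) / 2)
    rw [abs_div, abs_two] at this
    linarith
  have hsl : |a - b| / 2 ≤ 2 * |Real.sin ((a - b) / 2)| := by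
    have := Real.mul_abs_le_abs_sin (x := (a - b) / 2) (by
      rw [abs_div, abs_two]; linarith [Real.pi_gt_three])
    rw [abs_div, abs_two] at this
    have h4 : (1:ℝ) / 2 ≤ 2 / Real.pi := by
      rw [div_le_div_iff₀ (by norm_num) Real.pi_pos]; linarith [Real.pi_le_four]
    have h5 : (1:ℝ) / 2 * (|a - b| / 2) ≤ 2 / Real.pi * (|a - b| / 2) := by gcongr
    linarith
  have hvu : ‖va - vb‖ ≤ 1 / 4 := by
    rw [hd]
    calc _ ≤ q * r * ((1 + ‖G‖) * ‖n‖) := by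
          have h0 : 0 ≤ r := (abs_nonneg _).trans hab
          have h1 := hsu.trans hab
          gcongr
      _ ≤ _ := by linarith
  have hmm : m = m' := by
    by_contra hne
    have h3 := my_norm_ge (m - m') (sub_ne_zero.mpr hne)
    rw [← my_iv_norm] at h3
    have e : iv (m - m') = (va - vb) - (va - iv m) + (vb - iv m') := by
      ext i; simp [iv]
    have h4 : ‖iv (m - m')‖ ≤ ‖va - vb‖ + ‖va - iv m‖ + ‖vb - iv m'‖ := by
      rw [e]
      exact (norm_add_le _ _).trans (by gcongr; exact norm_sub_le _ _)
    linarith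
  subst hmm
  have hv2 : ‖va - vb‖ ≤ 2 * ε := by
    have e : va - vb = (va - iv m) - (vb - iv m) := by abel
    rw [e]
    exact (norm_sub_le _ _).trans (by linarith)
  rw [le_div_iff₀ (by positivity)]
  have h6 : q * (|a - b| / 2) * ‖y‖ ≤ 2 * ε := by
    refine le_trans ?_ hv2
    rw [hd]; gcongr
  calc |a - b| * (q * ‖n‖) ≤ |a - b| * (q * ((1 + ‖G‖) * ‖y‖)) := by gcongr
    _ = 2 * (1 + ‖G‖) * (q * (|a - b| / 2) * ‖y‖) := by ring
    _ ≤ 2 * (1 + ‖G‖) * (2 * ε) := by gcongr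
    _ = _ := by ring

def myBad (G : (Fin 2 → ℝ) →L[ℝ] (Fin 2 → ℝ)) (q : ℝ) (n : Fin 2 → ℤ) (ε : ℝ) : Set ℝ :=
  {θ | ∃ m, ‖q • (Real.cos θ • iv n + Real.sin θ • G (iv n)) - iv m‖ < ε}

lemma my_vol (G : (Fin 2 → ℝ) →L[ℝ] (Fin 2 → ℝ)) (hG : ∀ x, G (G x) = -x)
    (q : ℝ) (hq : 0 < q) : ∃ C : ℝ, 0 ≤ C ∧ ∀ n : Fin 2 → ℤ, n ≠ 0 → ∀ ε > 0, ∀ k : ℤ,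
    volume (myBad G q n ε ∩ Set.Icc (k : ℝ) (k + 1)) ≤ ENNReal.ofReal (C * ε) := by
  have hg := norm_nonneg G
  refine ⟨4 + (4 * q * (1 + ‖G‖) + 3) * (4 * (1 + ‖G‖) / q), by positivity, ?_⟩
  intro n hn ε hε k
  have hn1 := my_norm_ge n hn
  by_cases hε' : ε ≤ 1 / 4
  swap
  · calc _ ≤ volume (Set.Icc (k : ℝ) (k + 1)) := measure_mono Set.inter_subset_right
      _ = ENNReal.ofReal 1 := by rw [Real.volume_Icc]; congr 1; ring
      _ ≤ _ := by
        apply ENNReal.ofReal_le_ofReal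
        have : 0 ≤ (4 * q * (1 + ‖G‖) + 3) * (4 * (1 + ‖G‖) / q) * ε := by positivity
        push Not at hε'
        nlinarith
  set N : ℕ := ⌈4 * q * (1 + ‖G‖) * ‖n‖⌉₊ + 1 with hN
  have hN0 : (0 : ℝ) < N := by rw [hN]; positivity
  have hN1 : (1 : ℝ) ≤ N := by rw [hN]; push_cast; linarith [Nat.cast_nonneg (α := ℝ) ⌈4 * q * (1 + ‖G‖) * ‖n‖⌉₊]
  have hNl : 4 * q * (1 + ‖G‖) * ‖n‖ ≤ N := by
    rw [hN]; push_cast; linarith [Nat.le_ceil (4 * q * (1 + ‖G‖) * ‖n‖)]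
  have hNu : (N : ℝ) ≤ (4 * q * (1 + ‖G‖) + 2) * ‖n‖ := by
    rw [hN]; push_cast
    have := Nat.ceil_lt_add_one (a := 4 * q * (1 + ‖G‖) * ‖n‖) (by positivity)
    linarith
  set δ : ℝ := 4 * (1 + ‖G‖) * ε / (q * ‖n‖) with hδ
  have hδ0 : 0 ≤ δ := by positivity
  have hsub : myBad G q n ε ∩ Set.Icc (k : ℝ) (k + 1) ⊆
      ⋃ j ∈ Finset.range (N + 1), (myBad G q n ε ∩ Set.Icc (k + j / N : ℝ) (k + (j + 1) / N)) := by
    rintro θ ⟨hb, h1, h2⟩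
    have h0 : 0 ≤ (θ - k) * N := mul_nonneg (by linarith) hN0.le
    refine Set.mem_biUnion (x := ⌊(θ - k) * N⌋₊) ?_ ⟨hb, ?_, ?_⟩
    · simp only [Finset.coe_range, Set.mem_Iio, Nat.lt_succ_iff]
      apply Nat.floor_le_of_le
      nlinarith
    · have := Nat.floor_le h0
      rw [← div_le_iff₀ hN0] at this
      linarith
    · have := (Nat.lt_floor_add_one ((θ - k) * N)).le
      rw [← le_div_iff₀ hN0] at this
      linarith
  have hpc : ∀ j : ℕ, volume (myBad G q n ε ∩ Set.Icc (k + j / N : ℝ) (k + (j + 1) / N))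
      ≤ ENNReal.ofReal δ := by
    intro j
    refine (Real.volume_le_diam _).trans ?_
    apply Metric.ediam_le
    rintro a ⟨⟨m, hm⟩, ha1, ha2⟩ b ⟨⟨m', hm'⟩, hb1, hb2⟩
    rw [edist_dist, Real.dist_eq]
    apply ENNReal.ofReal_le_ofReal
    have hw : ((j : ℝ) + 1) / N = j / N + 1 / N := by ring
    refine my_piece G hG q hq n hn ε hε' a b (1 / N) ?_ ?_ ?_ m m' hm hm'
    · rw [div_le_one hN0]; exact hN1
    · rw [abs_le]; constructor <;> linarith
    · rw [mul_one_div, div_le_iff₀ hN0]; linarith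
  calc _ ≤ _ := measure_mono hsub
    _ ≤ ∑ j ∈ Finset.range (N + 1), volume (myBad G q n ε ∩ Set.Icc (k + j / N : ℝ) (k + (j + 1) / N)) := measure_biUnion_finset_le _ _
    _ ≤ ∑ j ∈ Finset.range (N + 1), ENNReal.ofReal δ := Finset.sum_le_sum fun j _ => hpc j
    _ = ENNReal.ofReal ((N + 1) * δ) := by
      rw [Finset.sum_const, Finset.card_range, nsmul_eq_mul, ENNReal.ofReal_mul (by positivity)]
      congr 1
      rw [← Nat.cast_succ, ENNReal.ofReal_natCast]
    _ ≤ _ := by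
      apply ENNReal.ofReal_le_ofReal
      calc ((N : ℝ) + 1) * δ ≤ ((4 * q * (1 + ‖G‖) + 3) * ‖n‖) * δ := by
            gcongr; linarith
        _ = (4 * q * (1 + ‖G‖) + 3) * (4 * (1 + ‖G‖) / q) * ε := by
            rw [hδ]; field_simp
        _ ≤ _ := by linarith

lemma my_local (G : (Fin 2 → ℝ) →L[ℝ] (Fin 2 → ℝ)) (hG : ∀ x, G (G x) = -x)
    (q : ℝ) (hq : 0 < q) (s : ℝ) (hs : 2 < s) (k : ℤ) :
    ∀ᵐ θ ∂(volume.restrict (Set.Icc (k : ℝ) (k + 1))), ∃ K > 0, ∀ n : Fin 2 → ℤ, n ≠ 0 →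
      ∀ m : Fin 2 → ℤ, K * ‖n‖ ^ (-s) ≤
        ‖q • (Real.cos θ • iv n + Real.sin θ • G (iv n)) - iv m‖ := by
  obtain ⟨C, hC, hvol⟩ := my_vol G hG q hq
  set μ := volume.restrict (Set.Icc (k : ℝ) (k + 1)) with hμ
  have hμb : ∀ n : Fin 2 → ℤ, n ≠ 0 → ∀ ε > 0, μ (myBad G q n ε) ≤ ENNReal.ofReal (C * ε) := by
    intro n hn ε hε
    rw [hμ, Measure.restrict_apply' measurableSet_Icc]
    exact hvol n hn ε hε k
  have hpos : ∀ n : Fin 2 → ℤ, n ≠ 0 → 0 < ‖n‖ ^ (-s) := fun n hn =>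
    Real.rpow_pos_of_pos (lt_of_lt_of_le one_pos (my_norm_ge n hn)) _
  have hfin : ∀ᵐ θ ∂μ, {n : Fin 2 → ℤ | θ ∈ (if n = 0 then ∅ else myBad G q n (‖n‖ ^ (-s)))}.Finite := by
    apply ae_finite_setOfPred_mem
    have hsum : Summable fun n : Fin 2 → ℤ => C * ‖n‖ ^ (-s) :=
      (EisensteinSeries.summable_one_div_norm_rpow hs).mul_left C
    refine ne_top_of_le_ne_top hsum.tsum_ofReal_ne_top (ENNReal.tsum_le_tsum fun n => ?_)
    split_ifs with hn
    · simp
    · exact hμb n hn _ (hpos n hn)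
  have hnull : ∀ᵐ θ ∂μ, ∀ n : Fin 2 → ℤ, n ≠ 0 → ∃ ε > 0, θ ∉ myBad G q n ε := by
    rw [ae_all_iff]
    intro n
    by_cases hn : n = 0
    · simp [hn]
    rw [ae_iff]
    have hsub : ∀ ε > 0, {θ | ¬ (n ≠ 0 → ∃ ε > 0, θ ∉ myBad G q n ε)} ⊆ myBad G q n ε := by
      intro ε hε θ hθ
      by_contra h
      exact hθ fun _ => ⟨ε, hε, h⟩
    have hlim : Tendsto (fun ε : ℝ => ENNReal.ofReal (C * ε)) (𝓝[>] 0) (𝓝 0) := by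
      have : Tendsto (fun ε : ℝ => ENNReal.ofReal (C * ε)) (𝓝 0) (𝓝 (ENNReal.ofReal (C * 0))) :=
        (ENNReal.continuous_ofReal.comp (continuous_const.mul continuous_id)).tendsto 0
      rw [mul_zero, ENNReal.ofReal_zero] at this
      exact this.mono_left nhdsWithin_le_nhds
    refine le_antisymm (ge_of_tendsto hlim ?_) (zero_le)
    filter_upwards [self_mem_nhdsWithin] with ε hε
    exact (measure_mono (hsub ε hε)).trans (hμb n hn ε hε)
  filter_upwards [hfin, hnull] with θ hF hN
  choose! ε hε0 hε using hN
  have hK : ∀ᶠ K in 𝓝[>] (0 : ℝ), ∀ n ∈ hF.toFinset, n ≠ 0 → K ≤ ε n := by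
    rw [Filter.eventually_all_finset]
    intro n _
    by_cases hn : n = 0
    · simp [hn]
    filter_upwards [nhdsWithin_le_nhds (Iic_mem_nhds (hε0 n hn))] with K hK _ using hK
  obtain ⟨K, ⟨hK1, hK2⟩, hK0⟩ :=
    ((hK.and (nhdsWithin_le_nhds (Iic_mem_nhds one_pos))).and self_mem_nhdsWithin).exists
  refine ⟨K, hK0, fun n hn m => ?_⟩
  have hK0' : (0 : ℝ) < K := hK0
  have hK2' : K ≤ 1 := hK2
  by_cases hmem : n ∈ hF.toFinset
  · have h1 : ε n ≤ ‖q • (Real.cos θ • iv n + Real.sin θ • G (iv n)) - iv m‖ := by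
      by_contra h
      exact hε n hn ⟨m, not_le.mp h⟩
    refine le_trans ?_ ((hK1 n hmem hn).trans h1)
    have : ‖n‖ ^ (-s) ≤ 1 :=
      Real.rpow_le_one_of_one_le_of_nonpos (my_norm_ge n hn) (by linarith)
    nlinarith
  · have h1 : θ ∉ myBad G q n (‖n‖ ^ (-s)) := by
      simpa [hn] using hmem
    have h2 : ‖n‖ ^ (-s) ≤ ‖q • (Real.cos θ • iv n + Real.sin θ • G (iv n)) - iv m‖ := by
      by_contra h
      exact h1 ⟨m, not_le.mp h⟩
    refine le_trans ?_ h2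
    have := hpos n hn
    nlinarith

lemma my_global (G : (Fin 2 → ℝ) →L[ℝ] (Fin 2 → ℝ)) (hG : ∀ x, G (G x) = -x)
    (q : ℝ) (hq : 0 < q) (s : ℝ) (hs : 2 < s) :
    ∀ᵐ θ : ℝ, ∃ K > 0, ∀ n : Fin 2 → ℤ, n ≠ 0 →
      ∀ m : Fin 2 → ℤ, K * ‖n‖ ^ (-s) ≤
        ‖q • (Real.cos θ • iv n + Real.sin θ • G (iv n)) - iv m‖ := by
  have h := fun k : ℤ => (ae_restrict_iff' measurableSet_Icc).mp (my_local G hG q hq s hs k)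
  rw [← ae_all_iff] at h
  filter_upwards [h] with θ hθ
  exact hθ ⌊θ⌋ ⟨Int.floor_le θ, (Int.lt_floor_add_one θ).le⟩

lemma my_norm2_ge (v : Fin 2 → ℝ) : ‖v‖ ≤ norm2 v := by
  unfold norm2
  rw [pi_norm_le_iff_of_nonneg (Real.sqrt_nonneg _)]
  intro i
  rw [Real.norm_eq_abs]
  apply Real.abs_le_sqrt
  fin_cases i
  · simp; positivity
  · simp; positivity

lemma my_dioph (A : Matrix (Fin 2) (Fin 2) ℝ) (hA : IsUnit A.det)
    (q σ : ℝ) (hq : 0 < q) (hσ : 1 < σ) :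
    ∀ᵐ θ : ℝ, ∃ K > 0, ∀ n : Fin 2 → ℤ, n ≠ 0 →
      K / norm2 (iv n) ^ (2 * σ) ≤ distZ2 ((q • (Aᵀ * Rot θ * (A⁻¹)ᵀ)).mulVec (iv n)) := by
  set J : Matrix (Fin 2) (Fin 2) ℝ := !![0, -1; 1, 0] with hJ
  set B : Matrix (Fin 2) (Fin 2) ℝ := Aᵀ * J * (A⁻¹)ᵀ with hB
  have hJJ : J * J = -1 := by
    ext i j; fin_cases i <;> fin_cases j <;> simp [hJ, Matrix.mul_apply]
  have h1 : (A⁻¹)ᵀ * Aᵀ = 1 := by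
    rw [← Matrix.transpose_mul, Matrix.mul_nonsing_inv _ hA, Matrix.transpose_one]
  have h2 : Aᵀ * (A⁻¹)ᵀ = 1 := by
    rw [← Matrix.transpose_mul, Matrix.nonsing_inv_mul _ hA, Matrix.transpose_one]
  have hBB : B * B = -1 := by
    calc B * B = Aᵀ * J * ((A⁻¹)ᵀ * Aᵀ) * J * (A⁻¹)ᵀ := by simp only [hB, Matrix.mul_assoc]
      _ = Aᵀ * (J * J) * (A⁻¹)ᵀ := by rw [h1]; simp only [Matrix.mul_assoc, Matrix.one_mul]
      _ = -1 := by rw [hJJ]; simp [h2]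
  set G : (Fin 2 → ℝ) →L[ℝ] (Fin 2 → ℝ) := LinearMap.toContinuousLinearMap B.mulVecLin with hGd
  have hGa : ∀ x, G x = B.mulVec x := fun x => by simp [hGd]
  have hG : ∀ x, G (G x) = -x := fun x => by
    rw [hGa, hGa, Matrix.mulVec_mulVec, hBB, Matrix.neg_mulVec, Matrix.one_mulVec]
  have hR : ∀ θ, Rot θ = Real.cos θ • (1 : Matrix (Fin 2) (Fin 2) ℝ) + Real.sin θ • J := by
    intro θ
    ext i j; fin_cases i <;> fin_cases j <;> simp [hJ, Rot]
  have hM : ∀ θ x, (q • (Aᵀ * Rot θ * (A⁻¹)ᵀ)).mulVec x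
      = q • (Real.cos θ • x + Real.sin θ • G x) := by
    intro θ x
    have : Aᵀ * Rot θ * (A⁻¹)ᵀ = Real.cos θ • (1 : Matrix (Fin 2) (Fin 2) ℝ) + Real.sin θ • B := by
      rw [hR, Matrix.mul_add, Matrix.add_mul]
      simp [h2, hB]
    rw [this, Matrix.smul_mulVec, Matrix.add_mulVec, Matrix.smul_mulVec, Matrix.smul_mulVec,
      Matrix.one_mulVec, hGa]
  filter_upwards [my_global G hG q hq (2 * σ) (by linarith)] with θ ⟨K, hK, h⟩
  refine ⟨K, hK, fun n hn => ?_⟩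
  rw [hM, distZ2]
  refine le_ciInf fun m => ?_
  refine le_trans ?_ ((h n hn m).trans (my_norm2_ge _))
  have hn1 := my_norm_ge n hn
  have hn2 : ‖n‖ ≤ norm2 (iv n) := my_iv_norm n ▸ my_norm2_ge (iv n)
  rw [Real.rpow_neg (norm_nonneg _), div_eq_mul_inv]
  have : (0 : ℝ) < ‖n‖ := by linarith
  gcongr


/-- Proposition: genericity of Diophantine 2D rotations. -/
theorem diophantine_generic (A : Matrix (Fin 2) (Fin 2) ℝ) (hA : IsUnit A.det)
    (q σ : ℝ) (hq : 0 < q) (hσ : (1433 : ℝ) / 1248 < σ) :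
    ∀ᵐ θ : ℝ, ∃ K > 0, IsDiophantine A q K σ θ := by
  have hσ' : 1 < σ := by linarith
  have h1 := my_dioph A hA q σ hq hσ'
  have h2 := my_dioph A hA q⁻¹ σ (inv_pos.mpr hq) hσ'
  have h3 := (Measure.measurePreserving_neg (volume : Measure ℝ)).quasiMeasurePreserving.ae h2
  filter_upwards [h1, h3] with θ ⟨K, hK, h⟩ ⟨K', hK', h'⟩
  refine ⟨min K K', lt_min hK hK', fun n hn => ⟨le_trans ?_ (h n hn), le_trans ?_ (h' n hn)⟩⟩
  · have : 0 ≤ norm2 (iv n) := Real.sqrt_nonneg _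
    gcongr
    exact min_le_left _ _
  · have : 0 ≤ norm2 (iv n) := Real.sqrt_nonneg _
    gcongr
    exact min_le_right _ _

end
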